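/- The set M₁ is I-dense in M₂: for every (μ,Q) ∈ M₂ with I(μ,Q) < +∞ there exists a sequence {(μ_n,Q_n)} ⊂ M₁ such that (μ_n,Q_n) → (μ,Q) and I(μ_n,Q_n) → I(μ,Q). -/

import Mathlib

open MeasureTheory ProbabilityTheory Filter Topology Set ENNReal

noncomputable section

/-- The data of transition rates `c(x,dy) = r(x) p(x,y) λ(dy)` on a state space `E`,
satisfying Assumption 1.1 (i)-(iii): `r` is continuous and nonnegative, `λ` is a probability
measure which is strictly positive on open sets, `p` is a strictly positive continuous
transition density, and `1/r` is `λ`-integrable. -/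
structure ChainSetting (E : Type*) [MeasurableSpace E] [TopologicalSpace E] where
  r : E → ℝ
  r_cont : Continuous r
  r_nonneg : ∀ x, 0 ≤ r x
  lam : Measure E
  lam_prob : IsProbabilityMeasure lam
  lam_pos : ∀ U : Set E, IsOpen U → U.Nonempty → 0 < lam U
  p : E → E → ℝ
  p_cont : Continuous fun z : E × E => p z.1 z.2
  p_pos : ∀ x y, 0 < p x y
  p_int : ∀ x, ∫ y, p x y ∂lam = 1
  inv_r_int : ∫⁻ x, (ENNReal.ofReal (r x))⁻¹ ∂lam ≠ ∞

namespace ChainSetting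

variable {E : Type*} [MeasurableSpace E] [TopologicalSpace E] (S : ChainSetting E)

/-- The (closed) set `E₀ = {x : r(x) = 0}` of absorbing states. -/
def E0 : Set E := {x | S.r x = 0}

/-- The skeleton transition probability `p(x,dy) = p(x,y) λ(dy)`. -/
def skel (x : E) : Measure E := S.lam.withDensity fun y => ENNReal.ofReal (S.p x y)

/-- The jump rates `c(x,dy) = r(x) p(x,y) λ(dy)`. -/
def cMeas (x : E) : Measure E := S.lam.withDensity fun y => ENNReal.ofReal (S.r x * S.p x y)

/-- The measure `μ(dx) c(x,dy)` on `E × E`. -/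
def muc (μ : Measure E) : Measure (E × E) :=
  (μ.prod S.lam).withDensity fun z => ENNReal.ofReal (S.r z.1 * S.p z.1 z.2)

/-- The invariant probability `π(dx) = π₀(1/r)⁻¹ π₀(dx)/r(x)` of the continuous-time chain,
built from the invariant probability `π₀` of the skeleton, cf. (1.2). -/
def piMeas (π₀ : Measure E) : Measure E :=
  (∫⁻ x, (ENNReal.ofReal (S.r x))⁻¹ ∂π₀)⁻¹ •
    π₀.withDensity fun x => (ENNReal.ofReal (S.r x))⁻¹

/-- Assumption 1.1 (iv): with `A_δ = {r < δ}`, there is a sequence `δ_n → 0` with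
`λ(A_{2δ_n}) ≤ C λ(A_{2δ_n} \ A_{δ_n})`. -/
def CondIV : Prop :=
  ∃ δ : ℕ → ℝ, (∀ n, 0 < δ n) ∧ Tendsto δ atTop (𝓝 0) ∧
    ∃ C : ℝ≥0∞, C ≠ ∞ ∧ ∀ n,
      S.lam {x | S.r x < 2 * δ n} ≤ C * S.lam ({x | S.r x < 2 * δ n} \ {x | S.r x < δ n})

end ChainSetting

/-- The convex function `Ψ(a) = a log a - (a - 1)` (with `Ψ(0) = 1`), extended to `ℝ≥0∞`. -/
def PsiE (a : ℝ≥0∞) : ℝ≥0∞ :=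
  if a = ∞ then ∞ else ENNReal.ofReal (a.toReal * Real.log a.toReal - a.toReal + 1)

open Classical in
/-- The joint rate functional `I(μ,Q)` of (2.3):
`I(μ,Q) = ∫∫ μ(dx)c(x,dy) Ψ(dQ/(μ(dx)c(x,dy)))` if the two marginals of `Q` coincide and
`Q ≪ μ(dx)c(x,dy)`, and `+∞` otherwise. -/
def ChainSetting.rateI0 {E : Type*} [MeasurableSpace E] [TopologicalSpace E]
    (S : ChainSetting E) (μ : Measure E) (Q : Measure (E × E)) : ℝ≥0∞ :=
  if Q.fst = Q.snd ∧ Q ≪ S.muc μ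
  then ∫⁻ z, PsiE (Q.rnDeriv (S.muc μ) z) ∂(S.muc μ)
  else ∞

/-- The joint rate functional `I` on `M₁(E) × M₊(E×E)`. -/
def ChainSetting.rateI {E : Type*} [MeasurableSpace E] [TopologicalSpace E]
    (S : ChainSetting E) (q : ProbabilityMeasure E × FiniteMeasure (E × E)) : ℝ≥0∞ :=
  S.rateI0 (q.1 : Measure E) (q.2 : Measure (E × E))

/-- The (topological) support of a measure: points all of whose open neighbourhoods have
positive measure. -/
def msupp {α : Type*} [TopologicalSpace α] {m : MeasurableSpace α} (μ : Measure α) : Set α :=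
  {x | ∀ U : Set α, IsOpen U → x ∈ U → 0 < μ U}

open Classical in
/-- Bundle a measure as a probability measure (junk value if it is not one). -/
def toPM {α : Type*} [MeasurableSpace α] [Nonempty α] (μ : Measure α) : ProbabilityMeasure α :=
  if h : IsProbabilityMeasure μ then ⟨μ, h⟩
  else ⟨Measure.dirac (Classical.arbitrary α), by infer_instance⟩

open Classical in
/-- Bundle a measure as a finite measure (junk value if it is not one). -/
def toFM {α : Type*} [MeasurableSpace α] (μ : Measure α) : FiniteMeasure α :=
  if h : IsFiniteMeasure μ then ⟨μ, h⟩ else 0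

/-- Membership in the set `M₁` of (5.7): with `K = supp μ ⊆ E \\ E₀` and `supp Q = K × K`,
there are disjoint open sets `D₁,…,D_ℓ ⊆ K` with `λ(K \\ ⋃ᵢ Dᵢ) = 0` such that
`dμ = ∑ᵢ aᵢ 1_{Dᵢ} dλ` with `aᵢ > 0` and `dQ = ∑_{ij} b_{ij} 1_{Dᵢ×Dⱼ} dλ×dλ` with
`b_{ij} > 0`. -/
def ChainSetting.MemM1 {E : Type*} [MeasurableSpace E] [TopologicalSpace E]
    (S : ChainSetting E) (μ : Measure E) (Q : Measure (E × E)) : Prop :=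
  msupp μ ⊆ S.E0ᶜ ∧ msupp Q = msupp μ ×ˢ msupp μ ∧
  ∃ (ℓ : ℕ) (D : Fin ℓ → Set E), (∀ i, IsOpen (D i)) ∧ (∀ i, D i ⊆ msupp μ) ∧
    Pairwise (Function.onFun Disjoint D) ∧ S.lam (msupp μ \ ⋃ i, D i) = 0 ∧
    (∃ a : Fin ℓ → ℝ, (∀ i, 0 < a i) ∧
      μ = S.lam.withDensity fun x =>
        ∑ i, Set.indicator (D i) (fun _ => ENNReal.ofReal (a i)) x) ∧
    (∃ b : Fin ℓ → Fin ℓ → ℝ, (∀ i j, 0 < b i j) ∧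
      Q = (S.lam.prod S.lam).withDensity fun z =>
        ∑ i, ∑ j, Set.indicator (D i ×ˢ D j) (fun _ => ENNReal.ofReal (b i j)) z)

/-- Membership in the set `M₂` of (5.8): `K = supp μ ⊆ E \\ E₀`, `supp Q = K × K`,
`μ ≪ λ` and `Q ≪ λ×λ`. -/
def ChainSetting.MemM2 {E : Type*} [MeasurableSpace E] [TopologicalSpace E]
    (S : ChainSetting E) (μ : Measure E) (Q : Measure (E × E)) : Prop :=
  msupp μ ⊆ S.E0ᶜ ∧ msupp Q = msupp μ ×ˢ msupp μ ∧
  μ ≪ S.lam ∧ Q ≪ S.lam.prod S.lam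

variable {E : Type*} [MeasurableSpace E] [TopologicalSpace E] [PolishSpace E]
  [CompactSpace E] [BorelSpace E] [Nonempty E]

set_option linter.unusedSectionVars false
section Abstract

variable {X : Type*} [MeasurableSpace X] {ι : Type*} [Fintype ι]

/-- A finite measurable partition modulo a null set. -/
structure IsPart (ν : Measure X) (P : ι → Set X) : Prop where
  meas : ∀ i, MeasurableSet (P i)
  disj : Pairwise (Function.onFun Disjoint P)
  null : ν (⋃ i, P i)ᶜ = 0

/-- Cellwise average of a function. -/
def cavg (ν : Measure X) (P : ι → Set X) (h : X → ℝ) : X → ℝ :=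
  fun x => ∑ i, (P i).indicator (fun _ => ⨍ y in P i, h y ∂ν) x

lemma indicator_sum_cell {M : Type*} [AddCommMonoid M] {P : ι → Set X}
    (hd : Pairwise (Function.onFun Disjoint P)) (a : ι → M)
    {i : ι} {x : X} (hx : x ∈ P i) :
    ∑ j, (P j).indicator (fun _ => a j) x = a i := by
  classical
  rw [Finset.sum_eq_single i]
  · simp [hx]
  · intro j _ hj
    apply Set.indicator_of_notMem
    intro hxj
    exact Set.disjoint_left.1 (hd hj) hxj hx
  · simp

namespace IsPart

variable {ν : Measure X} [IsFiniteMeasure ν] {P : ι → Set X} (hP : IsPart ν P)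

include hP

omit [IsFiniteMeasure ν] in
lemma cavg_cell (h : X → ℝ) {i : ι} {x : X} (hx : x ∈ P i) :
    cavg ν P h x = ⨍ y in P i, h y ∂ν :=
  indicator_sum_cell hP.disj _ hx

omit [IsFiniteMeasure ν] in
lemma ae_mem : ∀ᵐ x ∂ν, ∃ i, x ∈ P i := by
  have := hP.null
  rw [ae_iff]
  convert this using 2
  ext x; simp

lemma integral_eq {f : X → ℝ} (hf : Integrable f ν) : ∫ x, f x ∂ν = ∑ i, ∫ x in P i, f x ∂ν := by
  rw [← integral_iUnion_fintype hP.meas hP.disj (fun i => hf.integrableOn)]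
  have : (⋃ i, P i) =ᵐ[ν] Set.univ := by
    rw [ae_eq_univ]; exact hP.null
  rw [setIntegral_congr_set this, setIntegral_univ]

omit [IsFiniteMeasure ν] in
lemma measurable_sum (a : ι → ℝ) :
    Measurable (fun x => ∑ i, (P i).indicator (fun _ => a i) x) :=
  Finset.measurable_fun_sum _ fun i _ => measurable_const.indicator (hP.meas i)

omit [IsFiniteMeasure ν] in
lemma measurable_cavg (h : X → ℝ) : Measurable (cavg ν P h) := hP.measurable_sum _

omit [IsFiniteMeasure ν] in
lemma bound_cavg (h : X → ℝ) : ∃ C, ∀ x, |cavg ν P h x| ≤ C := by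
  refine ⟨∑ i, |⨍ y in P i, h y ∂ν|, fun x => ?_⟩
  refine (Finset.abs_sum_le_sum_abs _ _).trans (Finset.sum_le_sum fun i _ => ?_)
  by_cases hx : x ∈ P i <;> simp [hx]

lemma integrable_cavg (h : X → ℝ) : Integrable (cavg ν P h) ν := by
  obtain ⟨C, hC⟩ := hP.bound_cavg h
  exact Integrable.of_bound (hP.measurable_cavg h).aestronglyMeasurable C
    (Eventually.of_forall hC)

omit [IsFiniteMeasure ν] in
lemma cavg_nonneg {h : X → ℝ} (hh : ∀ x, 0 ≤ h x) (x : X) : 0 ≤ cavg ν P h x := by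
  refine Finset.sum_nonneg fun i _ => Set.indicator_nonneg (fun _ _ => ?_) _
  rw [setAverage_eq]
  exact smul_nonneg (by positivity) (integral_nonneg hh)

lemma setIntegral_cavg (h : X → ℝ) (i : ι) :
    ∫ x in P i, cavg ν P h x ∂ν = ∫ x in P i, h x ∂ν := by
  rw [setIntegral_congr_fun (hP.meas i) (g := fun _ => ⨍ y in P i, h y ∂ν)
    (fun x hx => hP.cavg_cell h hx), setIntegral_const, measure_smul_setAverage _ (by simp)]

/-- cellwise constant multipliers pass through. -/
lemma integral_cavg_mul {h κ : X → ℝ} {k : ι → ℝ} (hh : Integrable h ν)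
    (hκm : Measurable κ) {C : ℝ} (hκb : ∀ x, |κ x| ≤ C)
    (hκ : ∀ i, ∀ x ∈ P i, κ x = k i) :
    ∫ x, cavg ν P h x * κ x ∂ν = ∫ x, h x * κ x ∂ν := by
  rw [hP.integral_eq ((hP.integrable_cavg h).mul_bdd hκm.aestronglyMeasurable
      (Eventually.of_forall hκb)),
    hP.integral_eq (hh.mul_bdd hκm.aestronglyMeasurable (Eventually.of_forall hκb))]
  refine Finset.sum_congr rfl fun i _ => ?_
  rw [setIntegral_congr_fun (hP.meas i) (g := fun x => cavg ν P h x * k i)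
      (fun x hx => by simp only [hκ i x hx]),
    setIntegral_congr_fun (hP.meas i) (f := fun x => h x * κ x) (g := fun x => h x * k i)
      (fun x hx => by simp only [hκ i x hx]),
    integral_mul_const, integral_mul_const, hP.setIntegral_cavg]

lemma integral_cavg {h : X → ℝ} (hh : Integrable h ν) :
    ∫ x, cavg ν P h x ∂ν = ∫ x, h x ∂ν := by
  rw [hP.integral_eq (hP.integrable_cavg h), hP.integral_eq hh]
  exact Finset.sum_congr rfl fun i _ => hP.setIntegral_cavg h i

lemma integral_abs_cavg_le {h : X → ℝ} (hh : Integrable h ν) :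
    ∫ x, |cavg ν P h x| ∂ν ≤ ∫ x, |h x| ∂ν := by
  rw [hP.integral_eq (hP.integrable_cavg h).abs, hP.integral_eq hh.abs]
  refine Finset.sum_le_sum fun i _ => ?_
  calc ∫ x in P i, |cavg ν P h x| ∂ν = ∫ x in P i, |⨍ y in P i, h y ∂ν| ∂ν :=
        setIntegral_congr_fun (hP.meas i) fun x hx => by simp only [hP.cavg_cell h hx]
    _ = |∫ x in P i, h x ∂ν| := by
        rw [setIntegral_const, ← measure_smul_setAverage h (measure_ne_top ν (P i)),
          smul_eq_mul, smul_eq_mul, abs_mul, abs_of_nonneg measureReal_nonneg]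
    _ ≤ _ := abs_integral_le_integral_abs

omit [IsFiniteMeasure ν] in
lemma cavg_sub {f g : X → ℝ} (hf : Integrable f ν) (hg : Integrable g ν) (x : X) :
    cavg ν P (fun x => f x - g x) x = cavg ν P f x - cavg ν P g x := by
  unfold cavg
  rw [← Finset.sum_sub_distrib]
  refine Finset.sum_congr rfl fun i _ => ?_
  by_cases hx : x ∈ P i
  · simp only [Set.indicator_of_mem hx, setAverage_eq]
    rw [integral_sub hf.integrableOn hg.integrableOn, smul_sub]
  · simp [hx]

lemma cavg_close {g : X → ℝ} (hg : Integrable g ν) {η : ℝ}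
    (hosc : ∀ i, ∀ x ∈ P i, ∀ y ∈ P i, |g x - g y| ≤ η) :
    ∀ᵐ x ∂ν, |cavg ν P g x - g x| ≤ η := by
  have h0 : ∀ᵐ x ∂ν, ∀ i, x ∈ P i → ν (P i) ≠ 0 := by
    rw [ae_all_iff]
    intro i
    by_cases h : ν (P i) = 0
    · filter_upwards [measure_eq_zero_iff_ae_notMem.1 h] with x hx hx'
      exact absurd hx' hx
    · exact Eventually.of_forall fun _ _ => h
  filter_upwards [hP.ae_mem, h0] with x ⟨i, hi⟩ h0
  rw [hP.cavg_cell g hi]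
  have hpos := h0 i hi
  have hmem : ⨍ y in P i, g y ∂ν ∈ Metric.closedBall (g x) η := by
    refine (convex_closedBall _ _).set_average_mem Metric.isClosed_closedBall hpos
      (measure_ne_top _ _) ?_ hg.integrableOn
    filter_upwards [ae_restrict_mem (hP.meas i)] with y hy
    rw [Metric.mem_closedBall, Real.dist_eq]
    exact hosc i y hy x hi
  rwa [Metric.mem_closedBall, Real.dist_eq] at hmem

end IsPart

lemma integral_add3 {ν : Measure X} {f g h : X → ℝ} (hf : Integrable f ν) (hg : Integrable g ν)
    (hh : Integrable h ν) : ∫ x, (f x + g x + h x) ∂ν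
      = ∫ x, f x ∂ν + ∫ x, g x ∂ν + ∫ x, h x ∂ν := by
  have hfg : Integrable (fun x => f x + g x) ν := hf.add hg
  rw [integral_add hfg hh, integral_add hf hg]

lemma integral_comb4 {ν : Measure X} {f g h k : X → ℝ} (hf : Integrable f ν)
    (hg : Integrable g ν) (hh : Integrable h ν) (hk : Integrable k ν) :
    ∫ x, (f x - g x + h x - k x) ∂ν
      = ∫ x, f x ∂ν - ∫ x, g x ∂ν + ∫ x, h x ∂ν - ∫ x, k x ∂ν := by
  have hfg : Integrable (fun x => f x - g x) ν := hf.sub hg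
  have hfgh : Integrable (fun x => f x - g x + h x) ν := hfg.add hh
  rw [integral_sub hfgh hk, integral_add hfg hh, integral_sub hf hg]

lemma cavg_L1 {X : Type*} [MetricSpace X] [CompactSpace X] [MeasurableSpace X] [BorelSpace X]
    (ν : Measure X) [IsFiniteMeasure ν] {h : X → ℝ} (hh : Integrable h ν) {η : ℝ} (hη : 0 < η) :
    ∃ δ > 0, ∀ (ι : Type) [Fintype ι] (P : ι → Set X), IsPart ν P →
      (∀ i, ∀ x ∈ P i, ∀ y ∈ P i, dist x y < δ) →
      ∫ x, |cavg ν P h x - h x| ∂ν ≤ η := by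
  obtain ⟨g, hg, hgi⟩ := hh.exists_boundedContinuous_integral_sub_le (ε := η / 3) (by positivity)
  have huc := CompactSpace.uniformContinuous_of_continuous g.continuous
  have hV : 0 ≤ ν.real Set.univ := measureReal_nonneg
  set η' := η / 3 / (ν.real Set.univ + 1) with hη'
  have hη'0 : 0 < η' := by positivity
  obtain ⟨δ, hδ, H⟩ := Metric.uniformContinuous_iff.1 huc η' hη'0
  refine ⟨δ, hδ, fun ι _ P hP hd => ?_⟩
  have hc := hP.cavg_close hgi (η := η') fun i x hx y hy => by
    have := H (hd i x hx y hy)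
    rw [Real.dist_eq] at this
    exact this.le
  have h1 : ∫ x, |cavg ν P g x - g x| ∂ν ≤ η / 3 := by
    calc ∫ x, |cavg ν P g x - g x| ∂ν ≤ ∫ x, η' ∂ν :=
          integral_mono_ae ((hP.integrable_cavg g).sub hgi).abs (integrable_const _) hc
      _ = ν.real Set.univ * η' := by simp
      _ ≤ (ν.real Set.univ + 1) * η' := by nlinarith
      _ = η / 3 := by rw [hη']; field_simp
  have h2 : ∫ x, |cavg ν P (fun x => h x - g x) x| ∂ν ≤ η / 3 :=
    (hP.integral_abs_cavg_le (hh.sub hgi)).trans hg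
  have h3 : ∫ x, |h x - g x| ∂ν ≤ η / 3 := hg
  calc ∫ x, |cavg ν P h x - h x| ∂ν
      ≤ ∫ x, (|cavg ν P (fun x => h x - g x) x| + |cavg ν P g x - g x| + |h x - g x|) ∂ν := by
        refine integral_mono ((hP.integrable_cavg h).sub hh).abs
          (((hP.integrable_cavg _).abs.add ((hP.integrable_cavg g).sub hgi).abs).add
            (hh.sub hgi).abs) fun x => ?_
        simp only
        rw [hP.cavg_sub hh hgi]
        have := abs_add_three (cavg ν P h x - cavg ν P g x) (cavg ν P g x - g x) (g x - h x)
        rw [abs_sub_comm (g x) (h x)] at this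
        calc _ = |cavg ν P h x - cavg ν P g x + (cavg ν P g x - g x) + (g x - h x)| := by
              congr 1; ring
          _ ≤ _ := this
    _ = ∫ x, |cavg ν P (fun x => h x - g x) x| ∂ν + ∫ x, |cavg ν P g x - g x| ∂ν
          + ∫ x, |h x - g x| ∂ν := by
        have i1 : Integrable (fun x => |cavg ν P (fun x => h x - g x) x|) ν :=
          (hP.integrable_cavg _).abs
        have i2 : Integrable (fun x => |cavg ν P g x - g x|) ν :=
          ((hP.integrable_cavg g).sub hgi).abs
        have i3 : Integrable (fun x => |h x - g x|) ν := (hh.sub hgi).abs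
        exact integral_add3 i1 i2 i3
    _ ≤ η := by linarith

lemma exists_part {X : Type*} [MetricSpace X] [CompactSpace X] [MeasurableSpace X] [BorelSpace X]
    (ν : Measure X) [IsFiniteMeasure ν] {ε : ℝ} (hε : 0 < ε) :
    ∃ (N : ℕ) (D : Fin N → Set X), (∀ i, IsOpen (D i)) ∧ IsPart ν D ∧
      ∀ i, ∀ x ∈ D i, ∀ y ∈ D i, dist x y < ε := by
  have hr : ∀ x : X, ∃ s ∈ Ioo 0 (ε / 2), ν (frontier (Metric.ball x s)) = 0 := fun x => by
    obtain ⟨s, hs, h⟩ := exists_null_frontier_thickening ν {x} (show (0:ℝ) < ε / 2 by positivity)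
    rw [Metric.thickening_singleton] at h
    exact ⟨s, hs, h⟩
  choose s hs hsn using hr
  obtain ⟨t, ht⟩ := (isCompact_univ (X := X)).elim_finite_subcover
    (fun x => Metric.ball x (s x)) (fun x => Metric.isOpen_ball)
    (fun x _ => mem_iUnion.2 ⟨x, Metric.mem_ball_self (hs x).1⟩)
  let e := t.equivFin.symm
  let B : Fin t.card → Set X := fun i => Metric.ball (e i).1 (s (e i).1)
  let D : Fin t.card → Set X := fun i => B i \ ⋃ j : {j // j < i}, closure (B j)
  have hDo : ∀ i, IsOpen (D i) := fun i =>
    Metric.isOpen_ball.sdiff (isClosed_iUnion_of_finite fun _ => isClosed_closure)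
  have hlt : ∀ i j, i < j → Disjoint (D i) (D j) := fun i j hij => by
    rw [Set.disjoint_left]
    intro x hx hy
    exact hy.2 (mem_iUnion.2 ⟨⟨i, hij⟩, subset_closure hx.1⟩)
  refine ⟨t.card, D, hDo, ⟨fun i => (hDo i).measurableSet, ?_, ?_⟩, ?_⟩
  · intro i j hij
    rcases lt_or_gt_of_ne hij with h | h
    · exact hlt i j h
    · exact (hlt j i h).symm
  · refine measure_mono_null (t := ⋃ i, frontier (B i)) ?_ (measure_iUnion_null fun i => hsn _)
    intro x hx
    have hex : ∃ i, x ∈ B i := by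
      have := ht (mem_univ x)
      simp only [mem_iUnion] at this
      obtain ⟨y, hy, hxy⟩ := this
      refine ⟨t.equivFin ⟨y, hy⟩, ?_⟩
      simpa [B, e] using hxy
    by_contra hcon
    simp only [mem_iUnion, not_exists] at hcon
    have hall : ∀ n : ℕ, ∀ i : Fin t.card, i.1 = n → x ∉ B i := by
      intro n
      induction n using Nat.strong_induction_on with
      | _ n ih =>
        intro i hi hxi
        apply hx
        refine mem_iUnion.2 ⟨i, hxi, ?_⟩
        intro hc
        obtain ⟨⟨j, hj⟩, hjc⟩ := mem_iUnion.1 hc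
        have hnb : x ∉ B j := ih j.1 (by rw [← hi]; exact hj) j rfl
        refine hcon j ?_
        rw [frontier, (Metric.isOpen_ball : IsOpen (B j)).interior_eq]
        exact ⟨hjc, hnb⟩
    obtain ⟨i, hi⟩ := hex
    exact hall i.1 i rfl hi
  · intro i x hx y hy
    have h1 := Metric.mem_ball.1 hx.1
    have h2 := Metric.mem_ball.1 hy.1
    have h3 := (hs (e i).1).2
    have h4 := dist_triangle_right x y (e i).1
    linarith

/-- The homogeneous perspective `w Ψ(q/w)`. -/
def Frate (q w : ℝ) : ℝ := w * InformationTheory.klFun (q / w)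

lemma Frate_nonneg {q w : ℝ} (hq : 0 ≤ q) (hw : 0 ≤ w) : 0 ≤ Frate q w :=
  mul_nonneg hw (InformationTheory.klFun_nonneg (div_nonneg hq hw))

lemma Frate_eq {q w c : ℝ} (hc : 0 < c) (h : w = 0 → q = 0) :
    Frate q (w * c) = q * Real.log (q / w) - q * Real.log c + w * c - q := by
  unfold Frate InformationTheory.klFun
  by_cases hw0 : w = 0
  · simp [hw0, h hw0]
  by_cases hq0 : q = 0
  · simp [hq0]
  rw [Real.log_div hq0 (mul_ne_zero hw0 hc.ne'), Real.log_mul hw0 hc.ne', Real.log_div hq0 hw0]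
  field_simp
  ring

lemma Frate_young {q w c t : ℝ} (hq : 0 ≤ q) (hw : 0 ≤ w) (hc : 0 < c) (ht : 0 ≤ t)
    (h1 : w = 0 → q = 0) (h2 : t = 0 → q = 0) :
    q * Real.log t - q * Real.log c + w * c - w * t ≤ Frate q (w * c) := by
  rw [Frate_eq hc h1]
  by_cases hq0 : q = 0
  · subst hq0
    have := mul_nonneg hw ht
    simp; linarith
  have hq' : 0 < q := lt_of_le_of_ne hq (Ne.symm hq0)
  have hw' : 0 < w := lt_of_le_of_ne hw (fun h => hq0 (h1 h.symm))
  have ht' : 0 < t := lt_of_le_of_ne ht (fun h => hq0 (h2 h.symm))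
  have key := Real.log_le_sub_one_of_pos (show 0 < t * w / q by positivity)
  rw [Real.log_div (by positivity) hq0, Real.log_mul ht'.ne' hw'.ne'] at key
  have := mul_le_mul_of_nonneg_left key hq
  have e : q * (t * w / q - 1) = w * t - q := by field_simp
  rw [e] at this
  rw [Real.log_div hq0 hw'.ne']
  linarith

namespace IsPart

variable {ν : Measure X} [IsFiniteMeasure ν] {P : ι → Set X} (hP : IsPart ν P)

include hP

lemma cell_bound {κ : X → ℝ} {k : ι → ℝ} (hκ : ∀ i, ∀ x ∈ P i, κ x = k i)
    (h0 : ∀ x, (∀ i, x ∉ P i) → κ x = 0) (x : X) : |κ x| ≤ ∑ i, |k i| := by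
  by_cases hx : ∃ i, x ∈ P i
  · obtain ⟨i, hi⟩ := hx
    rw [hκ i x hi]
    exact Finset.single_le_sum (f := fun i => |k i|) (fun _ _ => abs_nonneg _) (Finset.mem_univ i)
  · push Not at hx
    rw [h0 x hx, abs_zero]
    exact Finset.sum_nonneg fun _ _ => abs_nonneg _

lemma cavg_off {h : X → ℝ} {x : X} (hx : ∀ i, x ∉ P i) : cavg ν P h x = 0 :=
  Finset.sum_eq_zero fun i _ => Set.indicator_of_notMem (hx i) _

lemma cell_zero {h : X → ℝ} (hh : Integrable h ν) (h0 : ∀ x, 0 ≤ h x) {i : ι}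
    (hi : ⨍ y in P i, h y ∂ν = 0) : ∀ᵐ x ∂ν.restrict (P i), h x = 0 := by
  have h1 : ∫ y in P i, h y ∂ν = 0 := by
    rw [← measure_smul_setAverage h (measure_ne_top ν (P i)), hi, smul_zero]
  exact (setIntegral_eq_zero_iff_of_nonneg_ae (Eventually.of_forall h0) hh.integrableOn).1 h1

lemma cavg_zero {h : X → ℝ} (hh : Integrable h ν) (h0 : ∀ x, 0 ≤ h x) :
    ∀ᵐ x ∂ν, cavg ν P h x = 0 → h x = 0 := by
  have h1 : ∀ᵐ x ∂ν, ∀ i, x ∈ P i → ⨍ y in P i, h y ∂ν = 0 → h x = 0 := by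
    rw [ae_all_iff]
    intro i
    by_cases hi : ⨍ y in P i, h y ∂ν = 0
    · filter_upwards [(ae_restrict_iff' (hP.meas i)).1 (hP.cell_zero hh h0 hi)] with x hx hxi _
      exact hx hxi
    · exact Eventually.of_forall fun _ _ h => absurd h hi
  filter_upwards [hP.ae_mem, h1] with x ⟨i, hi⟩ hx h'
  rw [hP.cavg_cell h hi] at h'
  exact hx i hi h'

lemma cavg_zero_zero {q w : X → ℝ} (hw : Integrable w ν)
    (hw0 : ∀ x, 0 ≤ w x) (hac : ∀ᵐ x ∂ν, w x = 0 → q x = 0) (x : X)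
    (h : cavg ν P w x = 0) : cavg ν P q x = 0 := by
  by_cases hx : ∃ i, x ∈ P i
  · obtain ⟨i, hi⟩ := hx
    rw [hP.cavg_cell _ hi] at h ⊢
    have : ∫ y in P i, q y ∂ν = 0 := by
      apply integral_eq_zero_of_ae
      filter_upwards [hP.cell_zero hw hw0 h, ae_restrict_of_ae hac] with y h1 h2
      exact h2 h1
    rw [setAverage_eq, this, smul_zero]
  · push Not at hx
    exact hP.cavg_off hx

lemma upper {q w c : X → ℝ} (hq : Integrable q ν) (hw : Integrable w ν)
    (hq0 : ∀ x, 0 ≤ q x) (hw0 : ∀ x, 0 ≤ w x) (hac : ∀ᵐ x ∂ν, w x = 0 → q x = 0)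
    (hcm : Measurable c) (hc : ∀ x, 0 < c x) {C L : ℝ} (hC : ∀ x, |c x| ≤ C)
    (hL : ∀ x, |Real.log (c x)| ≤ L)
    (hfin : Integrable (fun x => Frate (q x) (w x * c x)) ν) :
    Integrable (fun x => Frate (cavg ν P q x) (cavg ν P w x * c x)) ν ∧
    ∫ x, Frate (cavg ν P q x) (cavg ν P w x * c x) ∂ν ≤
      ∫ x, Frate (q x) (w x * c x) ∂ν + L * ∫ x, |cavg ν P q x - q x| ∂ν
        + C * ∫ x, |cavg ν P w x - w x| ∂ν := by
  set q' := cavg ν P q with hq'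
  set w' := cavg ν P w with hw'
  have iq' : Integrable q' ν := hP.integrable_cavg q
  have iw' : Integrable w' ν := hP.integrable_cavg w
  have q'0 : ∀ x, 0 ≤ q' x := hP.cavg_nonneg hq0
  have w'0 : ∀ x, 0 ≤ w' x := hP.cavg_nonneg hw0
  have hac' : ∀ x, w' x = 0 → q' x = 0 := hP.cavg_zero_zero hw hw0 hac
  let t : X → ℝ := fun x => q' x / w' x
  have htm : Measurable t := (hP.measurable_cavg q).div (hP.measurable_cavg w)
  have htc : ∀ i, ∀ x ∈ P i, t x = (⨍ y in P i, q y ∂ν) / (⨍ y in P i, w y ∂ν) :=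
    fun i x hx => by simp only [t, hq', hw', hP.cavg_cell _ hx]
  have hto : ∀ x, (∀ i, x ∉ P i) → t x = 0 := fun x hx => by
    simp only [t, hq', hP.cavg_off hx, zero_div]
  have htb := hP.cell_bound htc hto
  have hlm : Measurable (fun x => Real.log (t x)) := Real.measurable_log.comp htm
  have hlc : ∀ i, ∀ x ∈ P i, Real.log (t x)
      = Real.log ((⨍ y in P i, q y ∂ν) / (⨍ y in P i, w y ∂ν)) :=
    fun i x hx => by rw [htc i x hx]
  have hlb := hP.cell_bound hlc (fun x hx => by rw [hto x hx, Real.log_zero])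
  have hlcm : Measurable (fun x => Real.log (c x)) := Real.measurable_log.comp hcm
  have bdd : ∀ {f g : X → ℝ} {B : ℝ}, Integrable f ν → Measurable g → (∀ x, |g x| ≤ B) →
      Integrable (fun x => f x * g x) ν := fun hf hg hB =>
    hf.mul_bdd hg.aestronglyMeasurable (Eventually.of_forall hB)
  have e1 : ∫ x, q' x * Real.log (t x) ∂ν = ∫ x, q x * Real.log (t x) ∂ν :=
    hP.integral_cavg_mul hq hlm hlb hlc
  have e2 : ∫ x, w' x * t x ∂ν = ∫ x, w x * t x ∂ν :=
    hP.integral_cavg_mul hw htm htb htc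
  have e3 : ∀ x, w' x * t x = q' x := fun x => by
    by_cases h : w' x = 0
    · rw [h, hac' x h, zero_mul]
    · simp only [t]; field_simp
  have e4 : ∀ x, Frate (q' x) (w' x * c x)
      = q' x * Real.log (t x) - q' x * Real.log (c x) + w' x * c x - w' x * t x := fun x => by
    rw [Frate_eq (hc x) (hac' x), e3]
  have a1 := bdd iq' hlm hlb
  have a2 := bdd iq' hlcm hL
  have a3 := bdd iw' hcm hC
  have a4 := bdd iw' htm htb
  have b1 := bdd hq hlm hlb
  have b2 := bdd hq hlcm hL
  have b3 := bdd hw hcm hC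
  have b4 := bdd hw htm htb
  have I1 : Integrable (fun x => Frate (q' x) (w' x * c x)) ν := by
    simp_rw [e4]
    exact ((a1.sub a2).add a3).sub a4
  refine ⟨I1, ?_⟩
  have J1 : ∫ x, Frate (q' x) (w' x * c x) ∂ν = ∫ x, q' x * Real.log (t x) ∂ν
      - ∫ x, q' x * Real.log (c x) ∂ν + ∫ x, w' x * c x ∂ν - ∫ x, w' x * t x ∂ν := by
    simp_rw [e4]
    exact integral_comb4 a1 a2 a3 a4
  have J2 : ∫ x, q x * Real.log (t x) ∂ν
      - ∫ x, q x * Real.log (c x) ∂ν + ∫ x, w x * c x ∂ν - ∫ x, w x * t x ∂ν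
      ≤ ∫ x, Frate (q x) (w x * c x) ∂ν := by
    rw [← integral_comb4 b1 b2 b3 b4]
    refine integral_mono_ae (((b1.sub b2).add b3).sub b4) hfin ?_
    filter_upwards [hac, hP.cavg_zero hq hq0] with x h1 h2
    refine Frate_young (hq0 x) (hw0 x) (hc x) (div_nonneg (q'0 x) (w'0 x)) h1 ?_
    intro ht
    rcases div_eq_zero_iff.1 ht with h | h
    · exact h2 h
    · exact h2 (hac' x h)
  have J3 : ∫ x, q x * Real.log (c x) ∂ν - ∫ x, q' x * Real.log (c x) ∂ν
      ≤ L * ∫ x, |q' x - q x| ∂ν := by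
    rw [← integral_sub b2 a2, ← integral_const_mul]
    refine integral_mono (b2.sub a2) ((iq'.sub hq).abs.const_mul L) fun x => ?_
    simp only
    calc _ ≤ |(q x - q' x) * Real.log (c x)| := by rw [sub_mul]; exact le_abs_self _
      _ = |Real.log (c x)| * |q' x - q x| := by rw [abs_mul, abs_sub_comm, mul_comm]
      _ ≤ _ := mul_le_mul_of_nonneg_right (hL x) (abs_nonneg _)
  have J4 : ∫ x, w' x * c x ∂ν - ∫ x, w x * c x ∂ν ≤ C * ∫ x, |w' x - w x| ∂ν := by
    rw [← integral_sub a3 b3, ← integral_const_mul]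
    refine integral_mono (a3.sub b3) ((iw'.sub hw).abs.const_mul C) fun x => ?_
    simp only
    calc _ ≤ |(w' x - w x) * c x| := by rw [sub_mul]; exact le_abs_self _
      _ = |c x| * |w' x - w x| := by rw [abs_mul, mul_comm]
      _ ≤ _ := mul_le_mul_of_nonneg_right (hC x) (abs_nonneg _)
  linarith

end IsPart

lemma subseq_ae {ν : Measure X} {f : ℕ → X → ℝ} {g : X → ℝ}
    (hf : ∀ n, Integrable (f n) ν) (hg : Integrable g ν)
    (h : Tendsto (fun n => ∫ x, |f n x - g x| ∂ν) atTop (𝓝 0)) :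
    ∃ ms : ℕ → ℕ, StrictMono ms ∧
      ∀ᵐ x ∂ν, Tendsto (fun n => f (ms n) x) atTop (𝓝 (g x)) := by
  have h1 : TendstoInMeasure ν f atTop g := by
    refine tendstoInMeasure_of_tendsto_eLpNorm (p := 1) one_ne_zero
      (fun n => (hf n).aestronglyMeasurable) hg.aestronglyMeasurable ?_
    have : ∀ n, eLpNorm (f n - g) 1 ν = ENNReal.ofReal (∫ x, |f n x - g x| ∂ν) := fun n => by
      rw [eLpNorm_one_eq_lintegral_enorm, ← ofReal_integral_norm_eq_lintegral_enorm
        ((hf n).sub hg)]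
      rfl
    simp_rw [this]
    simpa using (ENNReal.tendsto_ofReal h)
  exact h1.exists_seq_tendsto_ae

lemma Frate_tendsto_le {q w : ℕ → ℝ} {q0 w0 : ℝ} (hq : Tendsto q atTop (𝓝 q0))
    (hw : Tendsto w atTop (𝓝 w0)) :
    ENNReal.ofReal (Frate q0 w0) ≤ liminf (fun n => ENNReal.ofReal (Frate (q n) (w n))) atTop := by
  by_cases h : w0 = 0
  · simp [h, Frate]
  · have : Tendsto (fun n => Frate (q n) (w n)) atTop (𝓝 (Frate q0 w0)) :=
      hw.mul ((InformationTheory.continuous_klFun.tendsto _).comp (hq.div hw h))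
    exact (ENNReal.tendsto_ofReal this).liminf_eq.ge

lemma Frate_measurable {q w : X → ℝ} (hq : Measurable q) (hw : Measurable w) :
    Measurable (fun x => Frate (q x) (w x)) :=
  hw.mul (InformationTheory.measurable_klFun.comp (hq.div hw))

/-- Convergence of the functional along cell averages converging in `L¹`. -/
lemma tendsto_rate {ν : Measure X} [IsFiniteMeasure ν] {κ : ℕ → Type} [∀ n, Fintype (κ n)]
    {P : ∀ n, κ n → Set X} (hP : ∀ n, IsPart ν (P n))
    {q w c : X → ℝ} (hq : Integrable q ν) (hw : Integrable w ν)
    (hqm : Measurable q) (hwm : Measurable w)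
    (hq0 : ∀ x, 0 ≤ q x) (hw0 : ∀ x, 0 ≤ w x) (hac : ∀ᵐ x ∂ν, w x = 0 → q x = 0)
    (hcm : Measurable c) (hc : ∀ x, 0 < c x) {C L : ℝ} (hC : ∀ x, |c x| ≤ C)
    (hL : ∀ x, |Real.log (c x)| ≤ L)
    (hfin : ∫⁻ x, ENNReal.ofReal (Frate (q x) (w x * c x)) ∂ν ≠ ∞)
    (hqt : Tendsto (fun n => ∫ x, |cavg ν (P n) q x - q x| ∂ν) atTop (𝓝 0))
    (hwt : Tendsto (fun n => ∫ x, |cavg ν (P n) w x - w x| ∂ν) atTop (𝓝 0)) :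
    Tendsto (fun n => ∫⁻ x, ENNReal.ofReal
        (Frate (cavg ν (P n) q x) (cavg ν (P n) w x * c x)) ∂ν) atTop
      (𝓝 (∫⁻ x, ENNReal.ofReal (Frate (q x) (w x * c x)) ∂ν)) := by
  have F0 : ∀ x, 0 ≤ Frate (q x) (w x * c x) := fun x =>
    Frate_nonneg (hq0 x) (mul_nonneg (hw0 x) (hc x).le)
  have hFint : Integrable (fun x => Frate (q x) (w x * c x)) ν := by
    refine ⟨(Frate_measurable hqm (hwm.mul hcm)).aestronglyMeasurable, ?_⟩
    rw [hasFiniteIntegral_iff_ofReal (Eventually.of_forall F0)]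
    exact lt_top_iff_ne_top.2 hfin
  have hupper : ∀ n, ∫⁻ x, ENNReal.ofReal
        (Frate (cavg ν (P n) q x) (cavg ν (P n) w x * c x)) ∂ν ≤
      ENNReal.ofReal (∫ x, Frate (q x) (w x * c x) ∂ν
        + L * ∫ x, |cavg ν (P n) q x - q x| ∂ν + C * ∫ x, |cavg ν (P n) w x - w x| ∂ν) := by
    intro n
    obtain ⟨h1, h2⟩ := (hP n).upper hq hw hq0 hw0 hac hcm hc hC hL hFint
    rw [← ofReal_integral_eq_lintegral_ofReal h1 (Eventually.of_forall fun x =>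
      Frate_nonneg ((hP n).cavg_nonneg hq0 x) (mul_nonneg ((hP n).cavg_nonneg hw0 x) (hc x).le))]
    exact ENNReal.ofReal_le_ofReal h2
  have hlim : Tendsto (fun n => ENNReal.ofReal (∫ x, Frate (q x) (w x * c x) ∂ν
        + L * ∫ x, |cavg ν (P n) q x - q x| ∂ν + C * ∫ x, |cavg ν (P n) w x - w x| ∂ν)) atTop
      (𝓝 (∫⁻ x, ENNReal.ofReal (Frate (q x) (w x * c x)) ∂ν)) := by
    rw [← ofReal_integral_eq_lintegral_ofReal hFint (Eventually.of_forall F0)]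
    apply ENNReal.tendsto_ofReal
    have := ((tendsto_const_nhds (x := ∫ x, Frate (q x) (w x * c x) ∂ν)).add
      (hqt.const_mul L)).add (hwt.const_mul C)
    simpa using this
  refine tendsto_of_subseq_tendsto fun ns hns => ?_
  obtain ⟨m1, hm1, A1⟩ := subseq_ae (fun n => (hP (ns n)).integrable_cavg q) hq
    (hqt.comp hns)
  obtain ⟨m2, hm2, A2⟩ := subseq_ae (fun n => (hP (ns (m1 n))).integrable_cavg w) hw
    (hwt.comp (hns.comp hm1.tendsto_atTop))
  refine ⟨m1 ∘ m2, ?_⟩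
  have hsub : Tendsto (fun n => ns (m1 (m2 n))) atTop atTop :=
    hns.comp (hm1.tendsto_atTop.comp hm2.tendsto_atTop)
  refine tendsto_of_le_liminf_of_limsup_le ?_ ?_
  · refine le_trans (lintegral_mono_ae ?_) (lintegral_liminf_le fun n =>
      (Frate_measurable ((hP (ns (m1 (m2 n)))).measurable_cavg q)
        (((hP (ns (m1 (m2 n)))).measurable_cavg w).mul hcm)).ennreal_ofReal)
    filter_upwards [A1, A2] with x h1 h2
    exact Frate_tendsto_le (h1.comp hm2.tendsto_atTop) (h2.mul_const (c x))
  · refine le_trans (limsup_le_limsup (Eventually.of_forall fun n => hupper _)) ?_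
    exact (hlim.comp hsub).limsup_eq.le

lemma exists_density {ν μ : Measure X} [IsFiniteMeasure ν] [IsFiniteMeasure μ] (h : μ ≪ ν) :
    ∃ m : X → ℝ, Measurable m ∧ (∀ x, 0 ≤ m x) ∧ Integrable m ν ∧
      μ = ν.withDensity fun x => ENNReal.ofReal (m x) := by
  refine ⟨fun x => (μ.rnDeriv ν x).toReal, (Measure.measurable_rnDeriv μ ν).ennreal_toReal,
    fun x => ENNReal.toReal_nonneg, Measure.integrable_toReal_rnDeriv, ?_⟩
  conv_lhs => rw [← Measure.withDensity_rnDeriv_eq μ ν h]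
  apply withDensity_congr_ae
  filter_upwards [Measure.rnDeriv_lt_top μ ν] with x hx
  rw [ENNReal.ofReal_toReal hx.ne]

lemma dens_apply {ν : Measure X} {h : X → ℝ} (hh : Integrable h ν) (h0 : ∀ x, 0 ≤ h x)
    {s : Set X} (hs : MeasurableSet s) :
    (ν.withDensity fun x => ENNReal.ofReal (h x)) s = ENNReal.ofReal (∫ x in s, h x ∂ν) := by
  rw [withDensity_apply _ hs, ofReal_integral_eq_lintegral_ofReal hh.integrableOn
    (Eventually.of_forall h0)]

lemma dens_univ {ν : Measure X} {h : X → ℝ} (hh : Integrable h ν) (h0 : ∀ x, 0 ≤ h x) :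
    (ν.withDensity fun x => ENNReal.ofReal (h x)) Set.univ = ENNReal.ofReal (∫ x, h x ∂ν) := by
  rw [dens_apply hh h0 MeasurableSet.univ, setIntegral_univ]

lemma dens_finite {ν : Measure X} {h : X → ℝ} (hh : Integrable h ν) :
    IsFiniteMeasure (ν.withDensity fun x => ENNReal.ofReal (h x)) :=
  isFiniteMeasure_withDensity_ofReal hh.2

lemma dens_integral {ν : Measure X} {h : X → ℝ} (hm : Measurable h) (h0 : ∀ x, 0 ≤ h x)
    (f : X → ℝ) :
    ∫ x, f x ∂(ν.withDensity fun x => ENNReal.ofReal (h x)) = ∫ x, f x * h x ∂ν := by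
  rw [integral_withDensity_eq_integral_toReal_smul hm.ennreal_ofReal
    (Eventually.of_forall fun _ => ENNReal.ofReal_lt_top)]
  refine integral_congr_ae (Eventually.of_forall fun x => ?_)
  simp only [ENNReal.toReal_ofReal (h0 x), smul_eq_mul, mul_comm]

lemma dens_tendsto {ν : Measure X} {h : X → ℝ} (hm : Measurable h)
    (h0 : ∀ x, 0 ≤ h x) (hi : Integrable h ν) {hs : ℕ → X → ℝ} (hsm : ∀ n, Measurable (hs n))
    (hs0 : ∀ n x, 0 ≤ hs n x) (hsi : ∀ n, Integrable (hs n) ν)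
    (ht : Tendsto (fun n => ∫ x, |hs n x - h x| ∂ν) atTop (𝓝 0))
    {f : X → ℝ} (hf : Measurable f) {B : ℝ} (hB : ∀ x, |f x| ≤ B) :
    Tendsto (fun n => ∫ x, f x ∂(ν.withDensity fun x => ENNReal.ofReal (hs n x))) atTop
      (𝓝 (∫ x, f x ∂(ν.withDensity fun x => ENNReal.ofReal (h x)))) := by
  simp_rw [dens_integral hm h0, dens_integral (hsm _) (hs0 _)]
  rw [tendsto_iff_dist_tendsto_zero]
  have hB' : Tendsto (fun n => B * ∫ x, |hs n x - h x| ∂ν) atTop (𝓝 0) := by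
    simpa using ht.const_mul B
  refine squeeze_zero (fun _ => dist_nonneg) (fun n => ?_) hB'
  have b1 : Integrable (fun x => f x * hs n x) ν :=
    (hsi n).bdd_mul hf.aestronglyMeasurable (Eventually.of_forall hB)
  have b2 : Integrable (fun x => f x * h x) ν :=
    hi.bdd_mul hf.aestronglyMeasurable (Eventually.of_forall hB)
  rw [Real.dist_eq, ← integral_sub b1 b2, ← integral_const_mul]
  refine abs_integral_le_integral_abs.trans
    (integral_mono (b1.sub b2).abs (((hsi n).sub hi).abs.const_mul B) fun x => ?_)
  simp only
  rw [← mul_sub, abs_mul]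
  exact mul_le_mul_of_nonneg_right (hB x) (abs_nonneg _)

lemma PsiE_ofReal {a : ℝ} (ha : 0 ≤ a) :
    PsiE (ENNReal.ofReal a) = ENNReal.ofReal (InformationTheory.klFun a) := by
  unfold PsiE InformationTheory.klFun
  rw [if_neg ENNReal.ofReal_ne_top, ENNReal.toReal_ofReal ha]
  congr 1; ring

lemma measurable_PsiE : Measurable PsiE := by
  unfold PsiE
  refine Measurable.ite (measurableSet_singleton _) measurable_const ?_
  refine ENNReal.measurable_ofReal.comp ?_
  exact ((ENNReal.measurable_toReal.mul (Real.measurable_log.comp ENNReal.measurable_toReal)).sub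
    ENNReal.measurable_toReal).add measurable_const

lemma rate_transfer {ν : Measure X} {q w : X → ℝ}
    (hqm : Measurable q) (hwm : Measurable w) (hq0 : ∀ x, 0 ≤ q x) (hw0 : ∀ x, 0 ≤ w x)
    (hwi : Integrable w ν) (hac : ∀ᵐ x ∂ν, w x = 0 → q x = 0) :
    (ν.withDensity fun x => ENNReal.ofReal (q x)) ≪ (ν.withDensity fun x => ENNReal.ofReal (w x)) ∧
    ∫⁻ x, PsiE ((ν.withDensity fun x => ENNReal.ofReal (q x)).rnDeriv
        (ν.withDensity fun x => ENNReal.ofReal (w x)) x)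
        ∂(ν.withDensity fun x => ENNReal.ofReal (w x))
      = ∫⁻ x, ENNReal.ofReal (Frate (q x) (w x)) ∂ν := by
  set W := ν.withDensity fun x => ENNReal.ofReal (w x) with hW
  have : IsFiniteMeasure W := dens_finite hwi
  have htm : Measurable fun x => ENNReal.ofReal (q x / w x) := (hqm.div hwm).ennreal_ofReal
  have hQ : (ν.withDensity fun x => ENNReal.ofReal (q x))
      = W.withDensity fun x => ENNReal.ofReal (q x / w x) := by
    rw [hW, ← withDensity_mul _ hwm.ennreal_ofReal htm]
    apply withDensity_congr_ae
    filter_upwards [hac] with x hx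
    simp only [Pi.mul_apply]
    rw [← ENNReal.ofReal_mul (hw0 x)]
    congr 1
    by_cases h : w x = 0
    · simp [h, hx h]
    · field_simp
  rw [hQ]
  refine ⟨withDensity_absolutelyContinuous _ _, ?_⟩
  have hr := Measure.rnDeriv_withDensity W htm
  calc _ = ∫⁻ x, PsiE (ENNReal.ofReal (q x / w x)) ∂W := by
        refine lintegral_congr_ae ?_
        filter_upwards [hr] with x hx
        rw [hx]
    _ = ∫⁻ x, ENNReal.ofReal (w x) * PsiE (ENNReal.ofReal (q x / w x)) ∂ν := by
        exact lintegral_withDensity_eq_lintegral_mul _ hwm.ennreal_ofReal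
          (measurable_PsiE.comp htm)
    _ = _ := by
        refine lintegral_congr fun x => ?_
        rw [PsiE_ofReal (div_nonneg (hq0 x) (hw0 x)), ← ENNReal.ofReal_mul (hw0 x)]
        rfl

lemma msupp_withDensity {X : Type*} [TopologicalSpace X] [MeasurableSpace X]
    [OpensMeasurableSpace X] {ν : Measure X} [ν.IsOpenPosMeasure] {f : X → ℝ≥0∞}
    (hf : Measurable f) {U : Set X} (hU : IsOpen U) (h1 : ∀ x ∈ U, f x ≠ 0)
    (h2 : ∀ x, x ∉ U → f x = 0) : msupp (ν.withDensity f) = closure U := by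
  ext x
  constructor
  · intro hx
    by_contra hc
    have := hx (closure U)ᶜ isClosed_closure.isOpen_compl hc
    rw [withDensity_apply _ isClosed_closure.isOpen_compl.measurableSet] at this
    have h0 : ∫⁻ a in (closure U)ᶜ, f a ∂ν = 0 := by
      rw [setLIntegral_congr_fun isClosed_closure.isOpen_compl.measurableSet
        (g := fun _ => 0) (fun y hy => h2 y fun h => hy (subset_closure h))]
      simp
    rw [h0] at this
    exact lt_irrefl _ this
  · intro hx V hV hxV
    obtain ⟨y, hyV, hyU⟩ := mem_closure_iff.1 hx V hV hxV
    by_contra hc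
    have h0 : ν.withDensity f V = 0 := by simpa using hc
    rw [withDensity_apply_eq_zero hf] at h0
    have hpos : 0 < ν (V ∩ U) := (hV.inter hU).measure_pos ν ⟨y, hyV, hyU⟩
    have : ν (V ∩ U) ≤ ν ({x | f x ≠ 0} ∩ V) := measure_mono fun z hz => ⟨h1 z hz.2, hz.1⟩
    rw [h0] at this
    exact absurd hpos (not_lt.2 this)

lemma msupp_eq {X : Type*} [TopologicalSpace X] [MeasurableSpace X] (ν : Measure X) :
    msupp ν = ν.support := by
  rw [Measure.support_eq_forall_isOpen]
  ext x
  simp only [msupp, mem_ofPred_eq]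
  constructor
  · intro h U hx hU
    exact h U hU hx
  · intro h U hU hx
    exact h U hx hU

lemma msupp_compl {X : Type*} [TopologicalSpace X] [SecondCountableTopology X]
    [MeasurableSpace X] (ν : Measure X) : ν (msupp ν)ᶜ = 0 := by
  rw [msupp_eq]; exact Measure.measure_compl_support

lemma msupp_closed {X : Type*} [TopologicalSpace X]
    [MeasurableSpace X] (ν : Measure X) : IsClosed (msupp ν) := by
  rw [msupp_eq]; exact Measure.isClosed_support

/-- product cells -/
def D2 {X : Type*} {ι : Type*} (D : ι → Set X) : ι × ι → Set (X × X) := fun k => D k.1 ×ˢ D k.2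

lemma IsPart.prod {ν : Measure X} [IsFiniteMeasure ν] {P : ι → Set X} (hP : IsPart ν P) :
    IsPart (ν.prod ν) (D2 P) where
  meas k := (hP.meas k.1).prod (hP.meas k.2)
  disj := by
    rintro ⟨i, j⟩ ⟨i', j'⟩ h
    rw [Function.onFun, Set.disjoint_left]
    rintro z ⟨h1, h2⟩ ⟨h3, h4⟩
    apply h
    have e1 : i = i' := by
      by_contra hne
      exact Set.disjoint_left.1 (hP.disj hne) h1 h3
    have e2 : j = j' := by
      by_contra hne
      exact Set.disjoint_left.1 (hP.disj hne) h2 h4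
    rw [e1, e2]
  null := by
    have h1 : ∀ᵐ z ∂(ν.prod ν), ∃ i, z.1 ∈ P i :=
      Measure.quasiMeasurePreserving_fst.ae hP.ae_mem
    have h2 : ∀ᵐ z ∂(ν.prod ν), ∃ i, z.2 ∈ P i :=
      Measure.quasiMeasurePreserving_snd.ae hP.ae_mem
    have : ∀ᵐ z ∂(ν.prod ν), z ∈ ⋃ k, D2 P k := by
      filter_upwards [h1, h2] with z ⟨i, hi⟩ ⟨j, hj⟩
      exact mem_iUnion.2 ⟨(i, j), hi, hj⟩
    exact this

section topo
variable [TopologicalSpace X] [OpensMeasurableSpace X] {ν : Measure X} [IsFiniteMeasure ν]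
  [ν.IsOpenPosMeasure] {P : ι → Set X}

lemma cavg_fst (hP : IsPart ν P) (ho : ∀ i, IsOpen (P i)) (h : X → ℝ) :
    ∀ᵐ z ∂(ν.prod ν), cavg (ν.prod ν) (D2 P) (fun z => h z.1) z = cavg ν P h z.1 := by
  filter_upwards [hP.prod.ae_mem] with z ⟨⟨i, j⟩, hz⟩
  rw [hP.prod.cavg_cell _ hz, hP.cavg_cell h hz.1, setAverage_eq, setAverage_eq]
  have hj : ν.real (P j) ≠ 0 := by
    rw [measureReal_ne_zero_iff]
    exact ((ho j).measure_pos ν ⟨_, hz.2⟩).ne'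
  have := setIntegral_prod_mul (μ := ν) (ν := ν) h (fun _ => (1:ℝ)) (P i) (P j)
  simp only [mul_one] at this
  simp only [D2, this, measureReal_prod_prod, setIntegral_const, smul_eq_mul, mul_one]
  rw [mul_inv]
  field_simp

lemma cavg_snd (hP : IsPart ν P) (ho : ∀ i, IsOpen (P i)) (h : X → ℝ) :
    ∀ᵐ z ∂(ν.prod ν), cavg (ν.prod ν) (D2 P) (fun z => h z.2) z = cavg ν P h z.2 := by
  filter_upwards [hP.prod.ae_mem] with z ⟨⟨j, i⟩, hz⟩
  rw [hP.prod.cavg_cell _ hz, hP.cavg_cell h hz.2, setAverage_eq, setAverage_eq]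
  have hj : ν.real (P j) ≠ 0 := by
    rw [measureReal_ne_zero_iff]
    exact ((ho j).measure_pos ν ⟨_, hz.1⟩).ne'
  have := setIntegral_prod_mul (μ := ν) (ν := ν) (fun _ => (1:ℝ)) h (P j) (P i)
  simp only [one_mul] at this
  simp only [D2, this, measureReal_prod_prod, setIntegral_const, smul_eq_mul, mul_one]
  rw [mul_inv]
  field_simp

end topo

lemma IsPart.selfadj {ν : Measure X} [IsFiniteMeasure ν] {P : ι → Set X} (hP : IsPart ν P)
    {f g : X → ℝ} (hf : Integrable f ν) (hg : Integrable g ν) :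
    ∫ x, f x * cavg ν P g x ∂ν = ∫ x, cavg ν P f x * g x ∂ν := by
  obtain ⟨C, hC⟩ := hP.bound_cavg g
  obtain ⟨B, hB⟩ := hP.bound_cavg f
  have h1 := hP.integral_cavg_mul hf (hP.measurable_cavg g) hC
    (fun i x hx => hP.cavg_cell g hx)
  have h2 := hP.integral_cavg_mul hg (hP.measurable_cavg f) hB
    (fun i x hx => hP.cavg_cell f hx)
  rw [← h1]
  simp_rw [mul_comm (cavg ν P f _)]
  exact h2

section topo2
variable [TopologicalSpace X] [OpensMeasurableSpace X] {ν : Measure X} [IsFiniteMeasure ν]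
  [ν.IsOpenPosMeasure] {P : ι → Set X}

lemma marg_eq (hP : IsPart ν P) (ho : ∀ i, IsOpen (P i)) {q : X × X → ℝ} (hqm : Measurable q)
    (hq0 : ∀ z, 0 ≤ q z) (hq : Integrable q (ν.prod ν))
    (h : ((ν.prod ν).withDensity fun z => ENNReal.ofReal (q z)).fst
      = ((ν.prod ν).withDensity fun z => ENNReal.ofReal (q z)).snd) :
    ((ν.prod ν).withDensity fun z => ENNReal.ofReal (cavg (ν.prod ν) (D2 P) q z)).fst
      = ((ν.prod ν).withDensity fun z => ENNReal.ofReal (cavg (ν.prod ν) (D2 P) q z)).snd := by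
  set Q := (ν.prod ν).withDensity fun z => ENNReal.ofReal (q z) with hQ
  have hP2 := hP.prod
  have key : ∀ (T : X × X → X), Measurable T →
      (∀ g : X → ℝ, ∀ᵐ z ∂(ν.prod ν),
        cavg (ν.prod ν) (D2 P) (fun z => g (T z)) z = cavg ν P g (T z)) →
      ∀ A, MeasurableSet A →
      ((ν.prod ν).withDensity fun z => ENNReal.ofReal (cavg (ν.prod ν) (D2 P) q z)) (T ⁻¹' A)
       = ENNReal.ofReal (∫ x, cavg ν P (A.indicator fun _ => (1:ℝ)) x ∂(Q.map T)) := by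
    intro T hT hav A hA
    rw [dens_apply (hP2.integrable_cavg q) (hP2.cavg_nonneg hq0) (hT hA)]
    congr 1
    have hfi : Integrable (fun z => A.indicator (fun _ => (1:ℝ)) (T z)) (ν.prod ν) := by
      refine Integrable.of_bound (C := 1) ?_ (Eventually.of_forall fun z => ?_)
      · exact ((measurable_const.indicator hA).comp hT).aestronglyMeasurable
      · by_cases hz : T z ∈ A <;> simp [hz]
    rw [← integral_indicator (hT hA)]
    calc _ = ∫ z, A.indicator (fun _ => (1:ℝ)) (T z) * cavg (ν.prod ν) (D2 P) q z ∂(ν.prod ν) := by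
          refine integral_congr_ae (Eventually.of_forall fun z => ?_)
          by_cases hz : T z ∈ A <;> simp [hz]
      _ = ∫ z, cavg (ν.prod ν) (D2 P) (fun z => A.indicator (fun _ => (1:ℝ)) (T z)) z * q z
            ∂(ν.prod ν) := hP2.selfadj hfi hq
      _ = ∫ z, cavg ν P (A.indicator fun _ => (1:ℝ)) (T z) * q z ∂(ν.prod ν) := by
          refine integral_congr_ae ?_
          filter_upwards [hav (A.indicator fun _ => (1:ℝ))] with z hz
          rw [hz]
      _ = ∫ z, cavg ν P (A.indicator fun _ => (1:ℝ)) (T z) ∂Q := (dens_integral hqm hq0 _).symm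
      _ = _ := by
          rw [integral_map hT.aemeasurable (hP.measurable_cavg _).aestronglyMeasurable]
  ext A hA
  rw [Measure.fst_apply hA, Measure.snd_apply hA,
    key Prod.fst measurable_fst (cavg_fst hP ho) A hA,
    key Prod.snd measurable_snd (cavg_snd hP ho) A hA]
  change ENNReal.ofReal (∫ x, _ ∂Q.fst) = ENNReal.ofReal (∫ x, _ ∂Q.snd)
  rw [h]

end topo2

lemma sum_reindex {s : ι → Prop} {ℓ : ℕ} (e : Fin ℓ ≃ {i // s i}) (f : ι → ℝ≥0∞)
    (h : ∀ i, ¬ s i → f i = 0) : ∑ i, f i = ∑ k, f (e k) := by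
  classical
  rw [Equiv.sum_comp e (fun i => f i.1)]
  rw [← Finset.sum_subtype (Finset.univ.filter s) (by simp) f]
  symm
  apply Finset.sum_filter_of_ne
  intro i _ hi
  by_contra hc
  exact hi (h i hc)

lemma ofReal_ind {P : ι → Set X} {a : ι → ℝ} (ha : ∀ i, 0 ≤ a i) (x : X) :
    ENNReal.ofReal (∑ i, (P i).indicator (fun _ => a i) x)
      = ∑ i, (P i).indicator (fun _ => ENNReal.ofReal (a i)) x := by
  rw [ENNReal.ofReal_sum_of_nonneg fun i _ => Set.indicator_nonneg (fun _ _ => ha i) _]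
  refine Finset.sum_congr rfl fun i _ => ?_
  by_cases h : x ∈ P i <;> simp [h]

lemma avg_pos {ν : Measure X} [IsFiniteMeasure ν] {h : X → ℝ} (hi : Integrable h ν)
    (h0 : ∀ x, 0 ≤ h x) {s : Set X} (hs : MeasurableSet s)
    (hpos : 0 < (ν.withDensity fun x => ENNReal.ofReal (h x)) s) : 0 < ⨍ x in s, h x ∂ν := by
  have hne : ν s ≠ 0 := fun hc => hpos.ne' (withDensity_absolutelyContinuous _ _ hc)
  rw [dens_apply hi h0 hs, ENNReal.ofReal_pos] at hpos
  rw [setAverage_eq, smul_eq_mul]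
  have : 0 < ν.real s := measureReal_nonneg.lt_of_ne' ((measureReal_ne_zero_iff (measure_ne_top ν s)).2 hne)
  positivity

lemma avg_zero {ν : Measure X} [IsFiniteMeasure ν] {h : X → ℝ} (hi : Integrable h ν)
    (h0 : ∀ x, 0 ≤ h x) {s : Set X} (hs : MeasurableSet s)
    (hz : (ν.withDensity fun x => ENNReal.ofReal (h x)) s = 0) : ⨍ x in s, h x ∂ν = 0 := by
  rw [dens_apply hi h0 hs, ENNReal.ofReal_eq_zero] at hz
  rw [setAverage_eq, le_antisymm hz (integral_nonneg h0), smul_zero]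

lemma avg_nonneg {ν : Measure X} {h : X → ℝ}
    (h0 : ∀ x, 0 ≤ h x) (s : Set X) : 0 ≤ ⨍ x in s, h x ∂ν := by
  rw [setAverage_eq]
  exact smul_nonneg (by positivity) (integral_nonneg h0)

end Abstract

lemma memM1_step {E : Type*} [MeasurableSpace E] [TopologicalSpace E] [SecondCountableTopology E]
    [BorelSpace E] (S : ChainSetting E) [IsProbabilityMeasure S.lam] [S.lam.IsOpenPosMeasure]
    {ι : Type*} [Fintype ι] {D : ι → Set E} (ho : ∀ i, IsOpen (D i)) (hD : IsPart S.lam D)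
    {m : E → ℝ} {q : E × E → ℝ} (hm0 : ∀ x, 0 ≤ m x)
    (hmi : Integrable m S.lam) (hq0 : ∀ x, 0 ≤ q x)
    (hqi : Integrable q (S.lam.prod S.lam))
    {μ : Measure E} {Q : Measure (E × E)}
    (hμ : μ = S.lam.withDensity fun x => ENNReal.ofReal (m x))
    (hQ : Q = (S.lam.prod S.lam).withDensity fun x => ENNReal.ofReal (q x))
    (hsupp : msupp Q = msupp μ ×ˢ msupp μ) {δ : ℝ} (hδ : 0 < δ)
    (hact : ∀ i, (D i ∩ msupp μ).Nonempty → ∀ x ∈ D i, δ < S.r x) :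
    S.MemM1 (S.lam.withDensity fun x => ENNReal.ofReal (cavg S.lam D m x))
      ((S.lam.prod S.lam).withDensity fun z =>
        ENNReal.ofReal (cavg (S.lam.prod S.lam) (D2 D) q z)) := by
  classical
  have hD2 := hD.prod
  let s : ι → Prop := fun i => (D i ∩ msupp μ).Nonempty
  let a : ι → ℝ := fun i => ⨍ y in D i, m y ∂S.lam
  let b : ι × ι → ℝ := fun k => ⨍ y in D2 D k, q y ∂(S.lam.prod S.lam)
  have a0 : ∀ i, 0 ≤ a i := fun i => avg_nonneg hm0 _
  have b0 : ∀ i, 0 ≤ b i := fun i => avg_nonneg hq0 _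
  have apos : ∀ i, s i → 0 < a i := by
    rintro i ⟨x, hx, hxK⟩
    refine avg_pos hmi hm0 (hD.meas i) ?_
    rw [← hμ]
    exact hxK _ (ho i) hx
  have azero : ∀ i, ¬ s i → a i = 0 := by
    intro i hi
    refine avg_zero hmi hm0 (hD.meas i) ?_
    rw [← hμ]
    refine measure_mono_null (fun x hx hxK => hi ⟨x, hx, hxK⟩) (msupp_compl μ)
  have bpos : ∀ i j, s i → s j → 0 < b (i, j) := by
    rintro i j ⟨x, hx, hxK⟩ ⟨y, hy, hyK⟩
    refine avg_pos hqi hq0 (hD2.meas (i, j)) ?_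
    rw [← hQ]
    have hxy : (x, y) ∈ msupp Q := by rw [hsupp]; exact ⟨hxK, hyK⟩
    exact hxy _ ((ho i).prod (ho j)) ⟨hx, hy⟩
  have bzero : ∀ i j, ¬ (s i ∧ s j) → b (i, j) = 0 := by
    intro i j hij
    refine avg_zero hqi hq0 (hD2.meas (i, j)) ?_
    rw [← hQ]
    have hsub : D2 D (i, j) ⊆ (msupp Q)ᶜ := by
      intro z hz hzK
      rw [hsupp] at hzK
      exact hij ⟨⟨z.1, hz.1, hzK.1⟩, ⟨z.2, hz.2, hzK.2⟩⟩
    exact measure_mono_null hsub (msupp_compl Q)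
  let e : Fin (Fintype.card {i // s i}) ≃ {i // s i} := (Fintype.equivFin _).symm
  let D' : Fin (Fintype.card {i // s i}) → Set E := fun k => D (e k)
  let U : Set E := ⋃ k, D' k
  have hUo : IsOpen U := isOpen_iUnion fun k => ho _
  have hUmem : ∀ i, s i → ∀ x ∈ D i, x ∈ U := fun i hi x hx =>
    mem_iUnion.2 ⟨e.symm ⟨i, hi⟩, by simpa [D'] using hx⟩
  have f1 : ∀ x, ENNReal.ofReal (cavg S.lam D m x)
      = ∑ k, (D' k).indicator (fun _ => ENNReal.ofReal (a (e k))) x := fun x => by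
    unfold cavg
    rw [ofReal_ind a0, sum_reindex e]
    intro i hi
    change (D i).indicator (fun _ => ENNReal.ofReal (a i)) x = 0
    simp [azero i hi]
  have f2 : ∀ z, ENNReal.ofReal (cavg (S.lam.prod S.lam) (D2 D) q z)
      = ∑ k, ∑ l, (D' k ×ˢ D' l).indicator (fun _ => ENNReal.ofReal (b (e k, e l))) z := fun z => by
    unfold cavg
    rw [ofReal_ind b0, Fintype.sum_prod_type, sum_reindex e]
    · refine Finset.sum_congr rfl fun k _ => ?_
      rw [sum_reindex e]
      · rfl
      · intro j hj
        change (D2 D (↑(e k), j)).indicator (fun _ => ENNReal.ofReal (b (↑(e k), j))) z = 0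
        simp [bzero (e k) j (fun h => hj h.2)]
    · intro i hi
      refine Finset.sum_eq_zero fun j _ => ?_
      change (D2 D (i, j)).indicator (fun _ => ENNReal.ofReal (b (i, j))) z = 0
      simp [bzero i j (fun h => hi h.1)]
  have s1 : msupp (S.lam.withDensity fun x => ENNReal.ofReal (cavg S.lam D m x)) = closure U := by
    refine msupp_withDensity (hD.measurable_cavg m).ennreal_ofReal hUo ?_ ?_
    · intro x hx
      obtain ⟨k, hk⟩ := mem_iUnion.1 hx
      rw [hD.cavg_cell m hk]
      exact (ENNReal.ofReal_pos.2 (apos _ (e k).2)).ne'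
    · intro x hx
      rw [f1]
      exact Finset.sum_eq_zero fun k _ => Set.indicator_of_notMem
        (fun h => hx (mem_iUnion.2 ⟨k, h⟩)) _
  have s2 : msupp ((S.lam.prod S.lam).withDensity fun z =>
        ENNReal.ofReal (cavg (S.lam.prod S.lam) (D2 D) q z)) = closure (U ×ˢ U) := by
    refine msupp_withDensity (hD2.measurable_cavg q).ennreal_ofReal (hUo.prod hUo) ?_ ?_
    · rintro z ⟨hx, hy⟩
      obtain ⟨k, hk⟩ := mem_iUnion.1 hx
      obtain ⟨l, hl⟩ := mem_iUnion.1 hy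
      rw [hD2.cavg_cell q (i := (↑(e k), ↑(e l))) ⟨hk, hl⟩]
      exact (ENNReal.ofReal_pos.2 (bpos _ _ (e k).2 (e l).2)).ne'
    · intro z hz
      rw [f2]
      refine Finset.sum_eq_zero fun k _ => Finset.sum_eq_zero fun l _ => Set.indicator_of_notMem
        (fun h => hz ⟨mem_iUnion.2 ⟨k, h.1⟩, mem_iUnion.2 ⟨l, h.2⟩⟩) _
  refine ⟨?_, ?_, Fintype.card {i // s i}, D', fun k => ho _, ?_, ?_, ?_, ?_, ?_⟩
  · rw [s1]
    have : closure U ⊆ {x | δ ≤ S.r x} := by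
      refine closure_minimal ?_ (isClosed_le continuous_const S.r_cont)
      intro x hx
      obtain ⟨k, hk⟩ := mem_iUnion.1 hx
      exact (hact _ (e k).2 x hk).le
    intro x hx hx0
    have h1 : δ ≤ S.r x := this hx
    have h2 : S.r x = 0 := hx0
    linarith
  · rw [s1, s2, closure_prod_eq]
  · intro k
    rw [s1]
    exact (subset_iUnion D' k).trans subset_closure
  · intro k l hkl
    exact hD.disj fun h => hkl (e.injective (Subtype.ext h))
  · rw [s1]
    refine measure_mono_null ?_ hD.null
    rintro x ⟨hx, hxU⟩ hxD
    obtain ⟨i, hi⟩ := mem_iUnion.1 hxD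
    by_cases hs : s i
    · exact hxU (hUmem i hs x hi)
    · obtain ⟨y, hyi, hyU⟩ := mem_closure_iff.1 hx (D i) (ho i) hi
      obtain ⟨k, hk⟩ := mem_iUnion.1 hyU
      have : i ≠ (e k).1 := fun h => hs (h ▸ (e k).2)
      exact Set.disjoint_left.1 (hD.disj this) hyi hk
  · exact ⟨fun k => a (e k), fun k => apos _ (e k).2, by simp_rw [f1]⟩
  · exact ⟨fun k l => b (e k, e l), fun k l => bpos _ _ (e k).2 (e l).2, by simp_rw [f2]⟩

lemma muc_dens {E : Type*} [MeasurableSpace E] [TopologicalSpace E] [SecondCountableTopology E]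
    [BorelSpace E] (S : ChainSetting E) [IsProbabilityMeasure S.lam] {m : E → ℝ}
    (hm : Measurable m) (hm0 : ∀ x, 0 ≤ m x) :
    S.muc (S.lam.withDensity fun x => ENNReal.ofReal (m x))
      = (S.lam.prod S.lam).withDensity fun z =>
          ENNReal.ofReal (m z.1 * (S.r z.1 * S.p z.1 z.2)) := by
  have hc : Measurable fun z : E × E => S.r z.1 * S.p z.1 z.2 :=
    ((S.r_cont.comp continuous_fst).mul S.p_cont).measurable
  have hm1 : Measurable fun z : E × E => m z.1 := hm.comp measurable_fst
  unfold ChainSetting.muc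
  rw [prod_withDensity_left hm.ennreal_ofReal,
    ← withDensity_mul _ hm1.ennreal_ofReal hc.ennreal_ofReal]
  congr 1
  ext z
  simp only [Pi.mul_apply]
  rw [← ENNReal.ofReal_mul (hm0 _)]

lemma rateI0_dens {E : Type*} [MeasurableSpace E] [TopologicalSpace E] [SecondCountableTopology E]
    [BorelSpace E] (S : ChainSetting E) [IsProbabilityMeasure S.lam]
    {m : E → ℝ} (hm : Measurable m) (hm0 : ∀ x, 0 ≤ m x)
    {q w : E × E → ℝ} (hqm : Measurable q) (hwm : Measurable w)
    (hq0 : ∀ x, 0 ≤ q x) (hw0 : ∀ x, 0 ≤ w x) (hwi : Integrable w (S.lam.prod S.lam))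
    (hac : ∀ᵐ x ∂(S.lam.prod S.lam), w x = 0 → q x = 0)
    (hw : ∀ᵐ z ∂(S.lam.prod S.lam), m z.1 * (S.r z.1 * S.p z.1 z.2) = w z)
    (hmarg : ((S.lam.prod S.lam).withDensity fun z => ENNReal.ofReal (q z)).fst
      = ((S.lam.prod S.lam).withDensity fun z => ENNReal.ofReal (q z)).snd) :
    S.rateI0 (S.lam.withDensity fun x => ENNReal.ofReal (m x))
      ((S.lam.prod S.lam).withDensity fun z => ENNReal.ofReal (q z))
      = ∫⁻ z, ENNReal.ofReal (Frate (q z) (w z)) ∂(S.lam.prod S.lam) := by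
  have hmuc : S.muc (S.lam.withDensity fun x => ENNReal.ofReal (m x))
      = (S.lam.prod S.lam).withDensity fun z => ENNReal.ofReal (w z) := by
    rw [muc_dens S hm hm0]
    apply withDensity_congr_ae
    filter_upwards [hw] with z hz
    rw [hz]
  obtain ⟨h1, h2⟩ := rate_transfer hqm hwm hq0 hw0 hwi hac
  unfold ChainSetting.rateI0
  rw [hmuc, if_pos ⟨hmarg, h1⟩, h2]

lemma toPM_coe {α : Type*} [MeasurableSpace α] [Nonempty α] {μ : Measure α}
    (h : IsProbabilityMeasure μ) : (toPM μ : Measure α) = μ := by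
  have e : toPM μ = (⟨μ, h⟩ : ProbabilityMeasure α) := dif_pos h
  rw [e]
  rfl

lemma toFM_coe {α : Type*} [MeasurableSpace α] {μ : Measure α}
    (h : IsFiniteMeasure μ) : (toFM μ : Measure α) = μ := by
  have e : toFM μ = (⟨μ, h⟩ : FiniteMeasure α) := dif_pos h
  rw [e]
  rfl

lemma main_metric {E : Type*} [MeasurableSpace E] [MetricSpace E]
    [CompactSpace E] [BorelSpace E] [Nonempty E] (S : ChainSetting E)
    (μ : Measure E) (hμ : IsProbabilityMeasure μ)
    (Q : Measure (E × E)) (hQ : IsFiniteMeasure Q)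
    (hmem : S.MemM2 μ Q)
    (hfin : S.rateI0 μ Q ≠ ∞) :
    ∃ (μs : ℕ → Measure E) (Qs : ℕ → Measure (E × E)),
      (∀ n, IsProbabilityMeasure (μs n)) ∧ (∀ n, IsFiniteMeasure (Qs n)) ∧
      (∀ n, S.MemM1 (μs n) (Qs n)) ∧
      Tendsto (fun n => ((toPM (μs n), toFM (Qs n)) :
          ProbabilityMeasure E × FiniteMeasure (E × E)))
        atTop (𝓝 (toPM μ, toFM Q)) ∧
      Tendsto (fun n => S.rateI0 (μs n) (Qs n)) atTop (𝓝 (S.rateI0 μ Q)) := by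
  have : IsProbabilityMeasure S.lam := S.lam_prob
  have : S.lam.IsOpenPosMeasure := ⟨fun U hU hne => (S.lam_pos U hU hne).ne'⟩
  obtain ⟨hK0, hsupp, hμac, hQac⟩ := hmem
  set Λ := S.lam.prod S.lam with hΛ
  obtain ⟨m, hm, hm0, hmi, hμe⟩ := exists_density hμac
  obtain ⟨q, hq, hq0, hqi, hQe⟩ := exists_density hQac
  have hcond : Q.fst = Q.snd ∧ Q ≪ S.muc μ := by
    by_contra hc
    apply hfin
    unfold ChainSetting.rateI0
    rw [if_neg hc]
  obtain ⟨hmarg, hQmuc⟩ := hcond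
  -- lower bound of `r` on the support
  obtain ⟨δ, hδ, hδK⟩ : ∃ δ > 0, ∀ x ∈ msupp μ, δ < S.r x := by
    rcases (msupp μ).eq_empty_or_nonempty with h | h
    · exact ⟨1, one_pos, by simp [h]⟩
    · obtain ⟨x, hx, hmin⟩ := (msupp_closed μ).isCompact.exists_isMinOn h S.r_cont.continuousOn
      have hpos : 0 < S.r x := (S.r_nonneg x).lt_of_ne fun h => hK0 hx h.symm
      exact ⟨S.r x / 2, by positivity, fun y hy => by
        have := isMinOn_iff.1 hmin y hy
        linarith⟩
  obtain ⟨ε0, hε0, hthick⟩ := (msupp_closed μ).isCompact.exists_thickening_subset_open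
    (isOpen_lt continuous_const S.r_cont) hδK
  -- the modified rate
  let c : E × E → ℝ := fun z => max (S.r z.1) δ * S.p z.1 z.2
  have hcc : Continuous c :=
    ((S.r_cont.comp continuous_fst).max continuous_const).mul S.p_cont
  have hc0 : ∀ z, 0 < c z := fun z => mul_pos (lt_max_of_lt_right hδ) (S.p_pos _ _)
  obtain ⟨C, hC⟩ := isCompact_univ.exists_bound_of_continuousOn hcc.continuousOn
  obtain ⟨L, hL⟩ := isCompact_univ.exists_bound_of_continuousOn
    (hcc.log fun z => (hc0 z).ne').continuousOn
  have hC' : ∀ z, |c z| ≤ C := fun z => hC z (mem_univ z)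
  have hL' : ∀ z, |Real.log (c z)| ≤ L := fun z => hL z (mem_univ z)
  have hceq : ∀ z : E × E, δ < S.r z.1 → S.r z.1 * S.p z.1 z.2 = c z := fun z hz => by
    simp only [c, max_eq_left hz.le]
  let w : E × E → ℝ := fun z => m z.1
  have hwm : Measurable w := hm.comp measurable_fst
  have hwi : Integrable w Λ := hmi.comp_fst S.lam
  have hw0 : ∀ z, 0 ≤ w z := fun z => hm0 _
  have hbdd : ∀ {f : E × E → ℝ}, Integrable f Λ → Integrable (fun z => f z * c z) Λ := fun hf =>
    hf.mul_bdd hcc.measurable.aestronglyMeasurable (Eventually.of_forall hC')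
  -- `m` vanishes off the support
  have hmK : ∀ᵐ x ∂S.lam, x ∉ msupp μ → m x = 0 := by
    have h := msupp_compl μ
    rw [hμe, withDensity_apply_eq_zero hm.ennreal_ofReal, ← hμe] at h
    filter_upwards [measure_eq_zero_iff_ae_notMem.1 h] with x hx hxK
    by_contra hne
    exact hx ⟨(ENNReal.ofReal_pos.2 ((hm0 x).lt_of_ne' hne)).ne', hxK⟩
  have hwc : ∀ᵐ z ∂Λ, m z.1 * (S.r z.1 * S.p z.1 z.2) = w z * c z := by
    filter_upwards [Measure.quasiMeasurePreserving_fst.ae hmK] with z hz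
    by_cases hzK : z.1 ∈ msupp μ
    · rw [hceq z (hδK _ hzK)]
    · simp only [w, hz hzK, zero_mul]
  have hac : ∀ᵐ z ∂Λ, w z = 0 → q z = 0 := by
    have hmuc := muc_dens S hm hm0
    have h0 : S.muc μ {z | w z = 0} = 0 := by
      rw [hμe, hmuc, withDensity_apply_eq_zero]
      · convert measure_empty (μ := Λ)
        ext z
        simp only [mem_inter_iff, mem_ofPred_eq, mem_empty_iff_false, iff_false, not_and]
        intro h1 h2
        apply h1
        have : m z.1 = 0 := h2
        simp [this]
      · exact ((hm.comp measurable_fst).mul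
          ((S.r_cont.comp continuous_fst).mul S.p_cont).measurable).ennreal_ofReal
    have h1 := hQmuc h0
    rw [hQe, withDensity_apply_eq_zero hq.ennreal_ofReal] at h1
    filter_upwards [measure_eq_zero_iff_ae_notMem.1 h1] with z hz hwz
    by_contra hne
    exact hz ⟨(ENNReal.ofReal_pos.2 ((hq0 z).lt_of_ne' hne)).ne', hwz⟩
  have hacc : ∀ᵐ z ∂Λ, w z * c z = 0 → q z = 0 := by
    filter_upwards [hac] with z hz h
    exact hz ((mul_eq_zero.1 h).resolve_right (hc0 z).ne')
  have hI : S.rateI0 μ Q = ∫⁻ z, ENNReal.ofReal (Frate (q z) (w z * c z)) ∂Λ := by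
    have hmarg' := hmarg
    rw [hQe] at hmarg'
    conv_lhs => rw [hμe, hQe]
    exact rateI0_dens S hm hm0 hq (hwm.mul hcc.measurable) hq0
      (fun z => mul_nonneg (hw0 z) (hc0 z).le) (hbdd hwi) hacc hwc hmarg'
  -- the partitions
  have hpart : ∀ n : ℕ, ∃ (N : ℕ) (D : Fin N → Set E), (∀ i, IsOpen (D i)) ∧ IsPart S.lam D ∧
      (∀ i, (D i ∩ msupp μ).Nonempty → ∀ x ∈ D i, δ < S.r x) ∧
      ∫ x, |cavg S.lam D m x - m x| ∂S.lam ≤ 1 / ((n : ℝ) + 1) ∧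
      ∫ z, |cavg Λ (D2 D) q z - q z| ∂Λ ≤ 1 / ((n : ℝ) + 1) ∧
      ∫ z, |cavg Λ (D2 D) w z - w z| ∂Λ ≤ 1 / ((n : ℝ) + 1) := by
    intro n
    have hη : (0:ℝ) < 1 / ((n : ℝ) + 1) := by positivity
    obtain ⟨δ1, hδ1, H1⟩ := cavg_L1 S.lam hmi hη
    obtain ⟨δ2, hδ2, H2⟩ := cavg_L1 Λ hqi hη
    obtain ⟨δ3, hδ3, H3⟩ := cavg_L1 Λ hwi hη
    obtain ⟨N, D, ho, hD, hdiam⟩ := exists_part S.lam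
      (show 0 < min (min ε0 δ1) (min δ2 δ3) by positivity)
    have hd2 : ∀ {ε}, min (min ε0 δ1) (min δ2 δ3) ≤ ε →
        ∀ k, ∀ x ∈ D2 D k, ∀ y ∈ D2 D k, dist x y < ε := fun hε k x hx y hy => by
      rw [Prod.dist_eq]
      exact max_lt ((hdiam _ _ hx.1 _ hy.1).trans_le hε) ((hdiam _ _ hx.2 _ hy.2).trans_le hε)
    refine ⟨N, D, ho, hD, ?_, H1 _ D hD ?_, H2 _ _ hD.prod (hd2 ?_), H3 _ _ hD.prod (hd2 ?_)⟩
    · rintro i ⟨y, hy, hyK⟩ x hx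
      apply hthick
      rw [Metric.mem_thickening_iff]
      exact ⟨y, hyK, (hdiam i x hx y hy).trans_le ((min_le_left _ _).trans (min_le_left _ _))⟩
    · intro i x hx y hy
      exact (hdiam i x hx y hy).trans_le ((min_le_left _ _).trans (min_le_right _ _))
    · exact (min_le_right _ _).trans (min_le_left _ _)
    · exact (min_le_right _ _).trans (min_le_right _ _)
  choose N D ho hD hact hTm hTq hTw using hpart
  have hz : ∀ {f : ℕ → ℝ}, (∀ n, 0 ≤ f n) → (∀ n, f n ≤ 1 / ((n : ℝ) + 1)) →
      Tendsto f atTop (𝓝 0) := fun h1 h2 =>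
    squeeze_zero h1 h2 tendsto_one_div_add_atTop_nhds_zero_nat
  have tm := hz (fun n => integral_nonneg fun _ => abs_nonneg _) hTm
  have tq := hz (fun n => integral_nonneg fun _ => abs_nonneg _) hTq
  have tw := hz (fun n => integral_nonneg fun _ => abs_nonneg _) hTw
  have hD2 : ∀ n, IsPart Λ (D2 (D n)) := fun n => (hD n).prod
  let μs : ℕ → Measure E := fun n => S.lam.withDensity fun x =>
    ENNReal.ofReal (cavg S.lam (D n) m x)
  let Qs : ℕ → Measure (E × E) := fun n => Λ.withDensity fun z =>
    ENNReal.ofReal (cavg Λ (D2 (D n)) q z)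
  have hμs : ∀ n, IsProbabilityMeasure (μs n) := fun n => ⟨by
    simp only [μs]
    rw [dens_univ ((hD n).integrable_cavg m) ((hD n).cavg_nonneg hm0), (hD n).integral_cavg hmi,
      ← dens_univ hmi hm0, ← hμe, measure_univ]⟩
  have hQs : ∀ n, IsFiniteMeasure (Qs n) := fun n => dens_finite ((hD2 n).integrable_cavg q)
  refine ⟨μs, Qs, hμs, hQs, fun n => ?_, ?_, ?_⟩
  · exact memM1_step S (ho n) (hD n) hm0 hmi hq0 hqi hμe hQe hsupp hδ (hact n)
  · refine Tendsto.prodMk_nhds ?_ ?_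
    · rw [ProbabilityMeasure.tendsto_iff_forall_integral_tendsto]
      intro f
      have e1 : ∀ n, (toPM (μs n) : Measure _) = μs n := fun n => toPM_coe (hμs n)
      simp_rw [e1, toPM_coe hμ]
      rw [hμe]
      exact dens_tendsto hm hm0 hmi (fun n => (hD n).measurable_cavg m)
        (fun n => (hD n).cavg_nonneg hm0) (fun n => (hD n).integrable_cavg m) tm
        f.continuous.measurable (fun x => f.norm_coe_le_norm x)
    · rw [FiniteMeasure.tendsto_iff_forall_integral_tendsto]
      intro f
      have e1 : ∀ n, (toFM (Qs n) : Measure _) = Qs n := fun n => toFM_coe (hQs n)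
      simp_rw [e1, toFM_coe hQ]
      rw [hQe]
      exact dens_tendsto hq hq0 hqi (fun n => (hD2 n).measurable_cavg q)
        (fun n => (hD2 n).cavg_nonneg hq0) (fun n => (hD2 n).integrable_cavg q) tq
        f.continuous.measurable (fun x => f.norm_coe_le_norm x)
  · have hIn : ∀ n, S.rateI0 (μs n) (Qs n) = ∫⁻ z, ENNReal.ofReal
        (Frate (cavg Λ (D2 (D n)) q z) (cavg Λ (D2 (D n)) w z * c z)) ∂Λ := by
      intro n
      refine rateI0_dens S ((hD n).measurable_cavg m) ((hD n).cavg_nonneg hm0)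
        ((hD2 n).measurable_cavg q) (((hD2 n).measurable_cavg w).mul hcc.measurable)
        ((hD2 n).cavg_nonneg hq0)
        (fun z => mul_nonneg ((hD2 n).cavg_nonneg hw0 z) (hc0 z).le)
        (hbdd ((hD2 n).integrable_cavg w)) (Eventually.of_forall fun z h => ?_) ?_ ?_
      · exact (hD2 n).cavg_zero_zero hwi hw0 hac z ((mul_eq_zero.1 h).resolve_right (hc0 z).ne')
      · filter_upwards [cavg_fst (hD n) (ho n) m,
          Measure.quasiMeasurePreserving_fst.ae (hD n).ae_mem] with z hz1 ⟨i, hi⟩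
        rw [hz1]
        by_cases hs : (D n i ∩ msupp μ).Nonempty
        · rw [hceq z (hact n i hs _ hi)]
        · have : cavg S.lam (D n) m z.1 = 0 := by
            rw [(hD n).cavg_cell m hi]
            refine avg_zero hmi hm0 ((hD n).meas i) ?_
            rw [← hμe]
            exact measure_mono_null (fun x hx hxK => hs ⟨x, hx, hxK⟩) (msupp_compl μ)
          rw [this, zero_mul, zero_mul]
      · have hmarg' := hmarg
        rw [hQe] at hmarg'
        exact marg_eq (hD n) (ho n) hq hq0 hqi hmarg'
    simp_rw [hIn]
    rw [hI] at hfin ⊢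
    exact tendsto_rate hD2 hqi hwi hq hwm hq0 hw0 hac hcc.measurable hc0 hC' hL' hfin tq tw

/-- **Lemma 5.5**: the set `M₁` is `I`-dense in `M₂`. -/
theorem M1_Idense_in_M2 (S : ChainSetting E)
    (μ : Measure E) (hμ : IsProbabilityMeasure μ)
    (Q : Measure (E × E)) (hQ : IsFiniteMeasure Q)
    (hmem : S.MemM2 μ Q)
    (hfin : S.rateI0 μ Q ≠ ∞) :
    ∃ (μs : ℕ → Measure E) (Qs : ℕ → Measure (E × E)),
      (∀ n, IsProbabilityMeasure (μs n)) ∧ (∀ n, IsFiniteMeasure (Qs n)) ∧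
      (∀ n, S.MemM1 (μs n) (Qs n)) ∧
      Tendsto (fun n => ((toPM (μs n), toFM (Qs n)) :
          ProbabilityMeasure E × FiniteMeasure (E × E)))
        atTop (𝓝 (toPM μ, toFM Q)) ∧
      Tendsto (fun n => S.rateI0 (μs n) (Qs n)) atTop (𝓝 (S.rateI0 μ Q)) := by
  let _ := TopologicalSpace.upgradeIsCompletelyMetrizable E
  exact main_metric S μ hμ Q hQ hmem hfin

end
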